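/- arXiv:2103.02321 — 2 statements merged into one kernel-verified Lean document; each statement's English description precedes it below -/
import Mathlib

section
/- Let u be quasi-definite with SMOP (P_n) and recurrence coefficients (a_n, b_n), assume b_1 + b_0 ≠ 0 and W(P_n, P_{n−1})(0) ≠ 0 for all n ≥ 2, and let (P^−_n) be the SMOP of the inverse functional u^{-1}. Then x P^−_n = P^−_{n+1} + b^−_n P^−_n + a^−_n P^−_{n−1} (P^−_{−1} = 0, P^−_0 = 1), where b^−_0 = −b_0, b^−_n = b_{n+1} − W(P_{n+1},P_{n−1})(0)/W(P_n,P_{n−1})(0) + W(P_{n+2},P_n)(0)/W(P_{n+1},P_n)(0) for n ≥ 1, a^−_1 = −(b_0² + a_1), and a^−_n = a_{n−1}·W(P_{n+1},P_n)(0)·W(P_{n−1},P_{n−2})(0)/W(P_n,P_{n−1})(0)² for n ≥ 2. -/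
open Polynomial

noncomputable section

/-- Apply a linear functional (identified with its moment sequence) to a polynomial:
`⟨u, p⟩ = Σ_k c_k u_k` for `p = Σ_k c_k x^k`. -/
def fapply (u : ℕ → ℂ) (p : Polynomial ℂ) : ℂ := p.sum fun k ck => ck * u k

/-- `P` is the sequence of monic orthogonal polynomials (SMOP) of the functional `u`. -/
def IsSMOP (u : ℕ → ℂ) (P : ℕ → Polynomial ℂ) : Prop :=
  (∀ n, (P n).Monic) ∧ (∀ n, (P n).natDegree = n) ∧
    (∀ n m, n ≠ m → fapply u (P n * P m) = 0) ∧ (∀ n, fapply u (P n * P n) ≠ 0)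

/-- A functional is quasi-definite iff it admits a SMOP. -/
def IsQuasiDefinite (u : ℕ → ℂ) : Prop := ∃ P, IsSMOP u P

/-- Three term recurrence relation `x P_n = P_{n+1} + b_n P_n + a_n P_{n-1}`,
with `P_{-1} = 0`, `P_0 = 1`. -/
def HasTTRR (P : ℕ → Polynomial ℂ) (a b : ℕ → ℂ) : Prop :=
  P 0 = 1 ∧ X * P 0 = P 1 + C (b 0) * P 0 ∧
    ∀ n, 1 ≤ n → X * P n = P (n + 1) + C (b n) * P n + C (a n) * P (n - 1)

/-- Wronskian `W(p,q)(x) = p(x) q'(x) - p'(x) q(x)`. -/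
def Wr (p q : Polynomial ℂ) (x : ℂ) : ℂ :=
  p.eval x * (derivative q).eval x - (derivative p).eval x * q.eval x

/-- The monic Jacobi matrix with diagonal `b`, superdiagonal `1` and subdiagonal
entries `J_{n+1,n} = a_{n+1}`. -/
def jacobi (a b : ℕ → ℂ) (i j : ℕ) : ℂ :=
  if i = j then b i else if j = i + 1 then 1 else if i = j + 1 then a i else 0

/-- Entrywise product of semi-infinite (banded) matrices; the sum has finite support. -/
def mprod (A B : ℕ → ℕ → ℂ) (i j : ℕ) : ℂ := ∑' k, A i k * B k j

/-- `w` is the moment sequence of the inverse functional `u⁻¹`: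
the convolution of the moments of `u` and `w` is `(1,0,0,…)`. -/
def IsInverseMoments (u w : ℕ → ℂ) : Prop :=
  ∀ n, ∑ k ∈ Finset.range (n + 1), u k * w (n - k) = if n = 0 then 1 else 0

/-- Apply a functional `u` to the second (outer) variable `y` of a bivariate polynomial
`D = Σ_k q_k(x) y^k`, giving `Σ_k u_k q_k(x)`. -/
def fapplyY (u : ℕ → ℂ) (D : Polynomial (Polynomial ℂ)) : Polynomial ℂ :=
  D.sum fun k q => u k • q

def Lf (u : ℕ → ℂ) : ℂ[X] →ₗ[ℂ] ℂ := (Polynomial.basisMonomials ℂ).constr ℂ u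

lemma Lf_X_pow (u : ℕ → ℂ) (k : ℕ) : Lf u (X ^ k) = u k := by
  have := (Polynomial.basisMonomials ℂ).constr_basis ℂ u k
  rw [Polynomial.coe_basisMonomials] at this
  rw [X_pow_eq_monomial]
  exact this

lemma fapply_eq (u : ℕ → ℂ) (p : ℂ[X]) : fapply u p = Lf u p := by
  conv_rhs => rw [p.as_sum_support_C_mul_X_pow]
  rw [map_sum]
  unfold fapply
  rw [Polynomial.sum_def]
  refine Finset.sum_congr rfl fun k _ => ?_
  rw [← smul_eq_C_mul, map_smul, Lf_X_pow, smul_eq_mul]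

def Tf (u : ℕ → ℂ) : ℂ[X] →ₗ[ℂ] ℂ[X] := (Polynomial.basisMonomials ℂ).constr ℂ
  (fun k => ∑ i ∈ Finset.range k, C (u i) * X ^ (k - 1 - i))

lemma Tf_X_pow (u : ℕ → ℂ) (k : ℕ) :
    Tf u (X ^ k) = ∑ i ∈ Finset.range k, C (u i) * X ^ (k - 1 - i) := by
  have := (Polynomial.basisMonomials ℂ).constr_basis ℂ
    (fun k => ∑ i ∈ Finset.range k, C (u i) * (X : ℂ[X]) ^ (k - 1 - i)) k
  rw [Polynomial.coe_basisMonomials] at this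
  rw [X_pow_eq_monomial]
  exact this

lemma Tf_X_mul (u : ℕ → ℂ) (p : ℂ[X]) : Tf u (X * p) = X * Tf u p + C (Lf u p) := by
  induction p using Polynomial.induction_on' with
  | add p q hp hq => rw [mul_add, map_add, map_add, map_add, hp, hq, C_add]; ring
  | monomial n c =>
    rw [← C_mul_X_pow_eq_monomial, ← smul_eq_C_mul, mul_smul_comm, map_smul, map_smul, map_smul,
      ← pow_succ', Tf_X_pow, Tf_X_pow, Lf_X_pow, Finset.sum_range_succ]
    have hs : ∑ i ∈ Finset.range n, C (u i) * (X : ℂ[X]) ^ (n + 1 - 1 - i)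
        = X * ∑ i ∈ Finset.range n, C (u i) * X ^ (n - 1 - i) := by
      rw [Finset.mul_sum]
      refine Finset.sum_congr rfl fun i hi => ?_
      have : n + 1 - 1 - i = (n - 1 - i) + 1 := by have := Finset.mem_range.1 hi; omega
      rw [this, pow_succ]; ring
    rw [hs, smul_eq_mul, C_mul, smul_eq_C_mul, smul_eq_C_mul]
    simp only [add_tsub_cancel_right, Nat.sub_self, pow_zero, mul_one]
    ring

lemma Lf_Tf (u v : ℕ → ℂ) (h : IsInverseMoments u v) (p : ℂ[X]) :
    Lf v (Tf u p) = p.coeff 1 := by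
  induction p using Polynomial.induction_on' with
  | add p q hp hq => rw [map_add, map_add, hp, hq, coeff_add]
  | monomial n c =>
    rw [← C_mul_X_pow_eq_monomial, ← smul_eq_C_mul, map_smul, map_smul, coeff_smul, Tf_X_pow,
      coeff_X_pow, map_sum]
    congr 1
    rcases n with _ | n
    · simp
    · have := h n
      simp only [← smul_eq_C_mul, map_smul, Lf_X_pow, smul_eq_mul, add_tsub_cancel_right]
      rw [this]
      by_cases hn : n = 0 <;> simp [hn, eq_comm]

/-- powers times `Tf`. -/
lemma Lf_pow_Tf (u v : ℕ → ℂ) (h : IsInverseMoments u v) (j : ℕ) : ∀ (q : ℂ[X]),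
    q.coeff 0 = 0 → q.coeff 1 = 0 → (∀ i < j, Lf u (X ^ i * q) = 0) →
    Lf v (X ^ j * Tf u q) = 0 := by
  induction j with
  | zero => intro q _ h1 _; simp [Lf_Tf u v h, h1]
  | succ j ih =>
    intro q h0 h1 h2
    have e : X ^ (j + 1) * Tf u q = X ^ j * Tf u (X * q) := by
      rw [Tf_X_mul]
      have := h2 0 (by omega)
      simp only [pow_zero, one_mul] at this
      rw [this, C_0]; ring
    rw [e]
    refine ih _ (by simp) (by rw [coeff_X_mul]; exact h0) ?_
    intro i hi
    have := h2 (i + 1) (by omega)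
    rwa [pow_succ, mul_assoc] at this

lemma deg_sub_lt {f p : ℂ[X]} {k : ℕ} (hf : f.degree < ((k + 1 : ℕ) : WithBot ℕ))
    (hm : p.Monic) (hd : p.natDegree = k) : (f - C (f.coeff k) * p).degree < (k : WithBot ℕ) := by
  rw [degree_lt_iff_coeff_zero] at hf ⊢
  intro m hm'
  rw [coeff_sub, coeff_C_mul]
  rcases hm'.eq_or_lt with rfl | hlt
  · have : p.coeff k = 1 := by rw [← hd]; exact hm
    rw [this]; ring
  · rw [hf m hlt, coeff_eq_zero_of_natDegree_lt (by omega : p.natDegree < m)]; ring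

lemma orth_lt {u : ℕ → ℂ} {P : ℕ → ℂ[X]} (hP : IsSMOP u P) (n : ℕ) : ∀ k ≤ n, ∀ f : ℂ[X],
    f.degree < (k : WithBot ℕ) → Lf u (f * P n) = 0 := by
  obtain ⟨hm, hd, ho, hk⟩ := hP
  intro k
  induction k with
  | zero =>
    intro _ f hf
    have : f = 0 := by
      rw [degree_lt_iff_coeff_zero] at hf
      ext i; simpa using hf i (by omega)
    simp [this]
  | succ k ih =>
    intro hkn f hf
    have h1 := ih (by omega) _ (deg_sub_lt hf (hm k) (hd k))
    have h2 := ho k n (by omega)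
    rw [fapply_eq] at h2
    rw [sub_mul, map_sub, mul_assoc, ← smul_eq_C_mul, map_smul, h2, smul_zero, sub_zero] at h1
    exact h1

lemma orth_pow {u : ℕ → ℂ} {P : ℕ → ℂ[X]} (hP : IsSMOP u P) {i n : ℕ} (h : i < n) :
    Lf u (X ^ i * P n) = 0 :=
  orth_lt hP n n le_rfl _ (by rw [degree_X_pow]; exact_mod_cast h)

lemma eq_zero_of_orth {u : ℕ → ℂ} {P : ℕ → ℂ[X]} (hP : IsSMOP u P) : ∀ (n : ℕ) (f : ℂ[X]),
    f.degree < (n : WithBot ℕ) → (∀ i < n, Lf u (X ^ i * f) = 0) → f = 0 := by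
  intro n
  induction n with
  | zero =>
    intro f hf _
    rw [degree_lt_iff_coeff_zero] at hf
    ext i; simpa using hf i (by omega)
  | succ k ih =>
    intro f hf h
    have hd := deg_sub_lt hf (hP.1 k) (hP.2.1 k)
    have h1 := orth_lt hP k k le_rfl _ hd
    have h2 : Lf u (f * P k) = 0 := by
      rw [(P k).as_sum_range_C_mul_X_pow, Finset.mul_sum, map_sum]
      refine Finset.sum_eq_zero fun i hi => ?_
      have hi' : i < k + 1 := by simpa [hP.2.1 k] using hi
      have : f * (C ((P k).coeff i) * X ^ i) = (P k).coeff i • (X ^ i * f) := by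
        rw [smul_eq_C_mul]; ring
      rw [this, map_smul, h i hi', smul_zero]
    rw [sub_mul, map_sub, mul_assoc, ← smul_eq_C_mul, map_smul, h2, zero_sub, neg_eq_zero,
      smul_eq_mul, ← fapply_eq] at h1
    have h3 : f.coeff k = 0 := (mul_eq_zero.1 h1).resolve_right (hP.2.2.2 k)
    rw [h3] at hd
    simp only [C_0, zero_mul, sub_zero] at hd
    exact ih f hd (fun i hi => h i (by omega))

lemma smop_unique {u : ℕ → ℂ} {P : ℕ → ℂ[X]} (hP : IsSMOP u P) {n : ℕ} {R : ℂ[X]}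
    (hm : R.Monic) (hd : R.natDegree = n) (h : ∀ i < n, Lf u (X ^ i * R) = 0) : P n = R := by
  have hc : R.coeff n = 1 := by rw [← hd]; exact hm
  have h0 : R.degree < ((n + 1 : ℕ) : WithBot ℕ) := by
    rw [degree_eq_natDegree hm.ne_zero, hd]; exact_mod_cast Nat.lt_succ_self n
  have h1 := deg_sub_lt h0 (hP.1 n) (hP.2.1 n)
  rw [hc, C_1, one_mul] at h1
  have := eq_zero_of_orth hP n _ h1 (fun i hi => by
    rw [mul_sub, map_sub, h i hi, orth_pow hP hi, sub_zero])
  exact (sub_eq_zero.1 this).symm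

lemma ttrr_monic {R : ℕ → ℂ[X]} {a b : ℕ → ℂ} (h : HasTTRR R a b) (n : ℕ) :
    ((R n).Monic ∧ (R n).natDegree = n) ∧ ((R (n + 1)).Monic ∧ (R (n + 1)).natDegree = n + 1) := by
  obtain ⟨h0, h1, h2⟩ := h
  induction n with
  | zero =>
    refine ⟨by simp [h0], ?_⟩
    have : R 1 = X - C (b 0) := by rw [h0] at h1; linear_combination -h1
    rw [zero_add, this]
    exact ⟨monic_X_sub_C _, natDegree_X_sub_C _⟩
  | succ n ih =>
    refine ⟨ih.2, ?_⟩
    obtain ⟨⟨m0, d0⟩, ⟨m1, d1⟩⟩ := ih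
    have h3 := h2 (n + 1) (by omega)
    simp only [add_tsub_cancel_right] at h3
    have e : R (n + 1 + 1) = (X - C (b (n + 1))) * R (n + 1) - C (a (n + 1)) * R n := by
      linear_combination -h3
    have mm : ((X - C (b (n + 1))) * R (n + 1)).Monic := (monic_X_sub_C _).mul m1
    have dd : ((X - C (b (n + 1))) * R (n + 1)).natDegree = n + 2 := by
      rw [(monic_X_sub_C _).natDegree_mul m1, natDegree_X_sub_C, d1]; ring
    have lt : (C (a (n + 1)) * R n).degree < ((X - C (b (n + 1))) * R (n + 1)).degree := by
      rw [degree_eq_natDegree mm.ne_zero, dd]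
      refine lt_of_le_of_lt degree_le_natDegree ?_
      have := natDegree_C_mul_le (a (n + 1)) (R n)
      exact_mod_cast (by omega : (C (a (n + 1)) * R n).natDegree < n + 2)
    rw [e]
    exact ⟨mm.sub_of_left lt, by rw [natDegree_sub_eq_left_of_natDegree_lt
      (by rw [dd]; have := natDegree_C_mul_le (a (n + 1)) (R n); omega), dd]⟩

lemma zero_combo (p r : ℂ[X]) (e f : ℂ) (hW : Wr p r 0 ≠ 0)
    (h0 : (C e * p + C f * r).coeff 0 = 0) (h1 : (C e * p + C f * r).coeff 1 = 0) :
    C e * p + C f * r = 0 := by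
  have d : ∀ s : ℂ[X], (derivative s).eval 0 = s.coeff 1 := by
    intro s; rw [← coeff_zero_eq_eval_zero, coeff_derivative]; simp
  simp only [Wr, d, ← coeff_zero_eq_eval_zero] at hW
  simp only [coeff_add, coeff_C_mul] at h0 h1
  have he : e = 0 := by
    refine (mul_eq_zero.1 (?_ : e * (p.coeff 0 * r.coeff 1 - p.coeff 1 * r.coeff 0) = 0)).resolve_right hW
    linear_combination r.coeff 1 * h0 - r.coeff 0 * h1
  have hf : f = 0 := by
    refine (mul_eq_zero.1 (?_ : f * (p.coeff 0 * r.coeff 1 - p.coeff 1 * r.coeff 0) = 0)).resolve_right hW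
    linear_combination p.coeff 0 * h1 - p.coeff 1 * h0
  simp [he, hf]

/-- three term recurrence coefficients of the SMOP `(P⁻_n)` of the inverse
functional `u⁻¹`. -/
theorem stmt_7 (u : ℕ → ℂ) (P : ℕ → Polynomial ℂ) (hP : IsSMOP u P)
    (a b : ℕ → ℂ) (hrec : HasTTRR P a b) (ha : ∀ n, 1 ≤ n → a n ≠ 0) (hu0 : u 0 ≠ 0)
    (hb : b 1 + b 0 ≠ 0) (hW : ∀ n, 2 ≤ n → Wr (P n) (P (n - 1)) 0 ≠ 0)
    (uinv : ℕ → ℂ) (hinv : IsInverseMoments u uinv)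
    (Pm : ℕ → Polynomial ℂ) (hPm : IsSMOP uinv Pm)
    (am bm : ℕ → ℂ)
    (hbm0 : bm 0 = -b 0)
    (hbm : ∀ n, 1 ≤ n → bm n = b (n + 1)
      - Wr (P (n + 1)) (P (n - 1)) 0 / Wr (P n) (P (n - 1)) 0
      + Wr (P (n + 2)) (P n) 0 / Wr (P (n + 1)) (P n) 0)
    (ham1 : am 1 = -(b 0 ^ 2 + a 1))
    (ham : ∀ n, 2 ≤ n → am n = a (n - 1)
      * (Wr (P (n + 1)) (P n) 0 * Wr (P (n - 1)) (P (n - 2)) 0)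
      / (Wr (P n) (P (n - 1)) 0) ^ 2) :
    HasTTRR Pm am bm := by
  have d : ∀ s : ℂ[X], (derivative s).eval 0 = s.coeff 1 := by
    intro s; rw [← coeff_zero_eq_eval_zero, coeff_derivative]; simp
  have hrec' := hrec
  obtain ⟨hP0, hP1, hPn⟩ := hrec
  have hP1' : P 1 = X - C (b 0) := by rw [hP0] at hP1; linear_combination -hP1
  have hPn' : ∀ n, X * P (n + 1) = P (n + 2) + C (b (n + 1)) * P (n + 1) + C (a (n + 1)) * P n :=
    fun n => by simpa using hPn (n + 1) (by omega)
  obtain ⟨w, hw⟩ : ∃ w : ℕ → ℂ, ∀ n, w n = Wr (P (n + 1)) (P n) 0 := ⟨_, fun _ => rfl⟩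
  obtain ⟨z, hz⟩ : ∃ z : ℕ → ℂ, ∀ n, z n = Wr (P (n + 2)) (P n) 0 := ⟨_, fun _ => rfl⟩
  have hw0 : w 0 = -1 := by rw [hw, Wr, hP0, zero_add, hP1']; simp
  have hwn : ∀ n, w n ≠ 0 := by
    intro n
    rcases n with _ | n
    · rw [hw0]; norm_num
    · rw [hw]; exact hW (n + 2) (by omega)
  obtain ⟨α, hα⟩ : ∃ α : ℕ → ℂ, ∀ n, α n = - z n / w n := ⟨_, fun _ => rfl⟩
  obtain ⟨β, hβ⟩ : ∃ β : ℕ → ℂ, ∀ n, β n = w (n + 1) / w n := ⟨_, fun _ => rfl⟩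
  have hβ0 : ∀ n, β n ≠ 0 := fun n => by rw [hβ]; exact div_ne_zero (hwn _) (hwn _)
  obtain ⟨q, hq⟩ : ∃ q : ℕ → ℂ[X], ∀ n, q n = P (n + 2) + C (α n) * P (n + 1) + C (β n) * P n :=
    ⟨_, fun _ => rfl⟩
  have hq0 : ∀ n, (q n).coeff 0 = 0 := by
    intro n
    have := hwn n
    rw [hq, hα, hβ]
    simp only [coeff_add, coeff_C_mul]
    field_simp
    simp only [hw, hz, Wr, d, ← coeff_zero_eq_eval_zero]
    ring
  have hq1 : ∀ n, (q n).coeff 1 = 0 := by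
    intro n
    have := hwn n
    rw [hq, hα, hβ]
    simp only [coeff_add, coeff_C_mul]
    field_simp
    simp only [hw, hz, Wr, d, ← coeff_zero_eq_eval_zero]
    ring
  have hbm' : ∀ n, bm (n + 1) = b (n + 2) + α n - α (n + 1) := by
    intro n
    rw [hbm (n + 1) (by omega), hα, hα, hz, hz, hw, hw]
    simp only [add_tsub_cancel_right]
    ring
  have ham' : ∀ n, am (n + 2) = a (n + 1) * β (n + 1) / β n := by
    intro n
    rw [ham (n + 2) (by omega), hβ, hβ]
    have e1 := hwn n
    have e2 := hwn (n + 1)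
    have e3 : n + 2 - 1 = n + 1 := rfl
    have e4 : n + 2 - 2 = n := rfl
    rw [e3, e4, ← hw, ← hw, ← hw]
    field_simp
  -- recurrences for q
  have hXq0 : X * q 0 = q 1 + C (bm 1) * q 0 := by
    have key : X * q 0 - q 1 - C (bm 1) * q 0 =
        C (a 2 + α 0 * b 1 + β 0 - β 1 - bm 1 * α 0) * P 1
          + C (α 0 * a 1 + β 0 * b 0 - bm 1 * β 0) * P 0 := by
      have h1 := hPn' 1
      have h0 := hPn' 0
      rw [hbm' 0]
      rw [hq, hq]
      simp only [C_add, C_sub, C_mul, zero_add, Nat.reduceAdd] at *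
      linear_combination h1 + C (α 0) * h0 + C (β 0) * hP1
    have := zero_combo (P 1) (P 0) _ _ (by have := hwn 0; rwa [hw] at this)
      (by rw [← key]; simp [hq0]) (by rw [← key]; simp [hq0, hq1, coeff_X_mul])
    rw [← key] at this
    linear_combination this
  have hXq : ∀ n, X * q (n + 1) = q (n + 2) + C (bm (n + 2)) * q (n + 1) + C (am (n + 2)) * q n := by
    intro n
    have key : X * q (n + 1) - q (n + 2) - C (bm (n + 2)) * q (n + 1) - C (am (n + 2)) * q n =
        C (a (n + 3) + α (n + 1) * b (n + 2) + β (n + 1) - β (n + 2) - bm (n + 2) * α (n + 1)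
            - am (n + 2)) * P (n + 2)
          + C (α (n + 1) * a (n + 2) + β (n + 1) * b (n + 1) - bm (n + 2) * β (n + 1)
            - am (n + 2) * α n) * P (n + 1) := by
      have h2 := hPn' (n + 2)
      have h1 := hPn' (n + 1)
      have h0 := hPn' n
      have hz : C (am (n + 2)) * C (β n) = C (a (n + 1)) * C (β (n + 1)) := by
        rw [← C_mul, ← C_mul, ham']
        have := hβ0 n
        congr 1
        field_simp
      rw [hbm' (n + 1)]
      rw [hq, hq, hq]
      simp only [C_add, C_sub, C_mul, add_assoc, Nat.reduceAdd] at *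
      linear_combination h2 + C (α (n + 1)) * h1 + C (β (n + 1)) * h0 - P n * hz
    have := zero_combo (P (n + 2)) (P (n + 1)) _ _ (by have := hwn (n + 1); rwa [hw] at this)
      (by rw [← key]; simp [hq0]) (by rw [← key]; simp [hq0, hq1, coeff_X_mul])
    rw [← key] at this
    linear_combination this
  have hLq : ∀ n i, i < n → Lf u (X ^ i * q n) = 0 := by
    intro n i hi
    have : X ^ i * q n = X ^ i * P (n + 2) + α n • (X ^ i * P (n + 1)) + β n • (X ^ i * P n) := by
      rw [hq]; simp only [smul_eq_C_mul]; ring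
    rw [this, map_add, map_add, map_smul, map_smul, orth_pow hP (by omega : i < n + 2),
      orth_pow hP (by omega : i < n + 1), orth_pow hP hi]
    simp
  have hL1 : Lf u 1 = u 0 := by simpa using Lf_X_pow u 0
  have hLq0 : Lf u (q 0) = β 0 * u 0 := by
    have : q 0 = X ^ 0 * P 2 + α 0 • (X ^ 0 * P 1) + β 0 • (1 : ℂ[X]) := by
      rw [hq, hP0]; simp only [smul_eq_C_mul]; ring
    rw [this, map_add, map_add, map_smul, map_smul, orth_pow hP (by omega : 0 < 2),
      orth_pow hP (by omega : 0 < 1), hL1]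
    simp
  have hP2 : P 2 = (X - C (b 1)) * (X - C (b 0)) - C (a 1) := by
    have := hPn' 0
    rw [zero_add, zero_add, hP0, hP1'] at this
    linear_combination -this
  have hw1 : w 1 = -(b 0 ^ 2 + a 1) := by
    rw [hw, Wr, hP2, hP1']; simp; ring
  have hz0 : z 0 = b 0 + b 1 := by
    rw [hz, Wr, zero_add, hP0, hP2]; simp; ring
  have hq00 : q 0 = X * (X * 1) := by
    rw [hq, hα, hβ, zero_add, zero_add, hw0, hw1, hz0, hP2, hP1', hP0]
    simp only [neg_div_neg_eq, div_one, C_add, C_pow]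
    ring
  have hT1 : Tf u 1 = 0 := by simpa using Tf_X_pow u 0
  have hu1 : Lf u X = b 0 * u 0 := by
    have := orth_pow hP (by omega : 0 < 1)
    rw [hP1', pow_zero, one_mul, map_sub, sub_eq_zero] at this
    rw [this, ← mul_one (C (b 0)), ← smul_eq_C_mul, map_smul, hL1, smul_eq_mul]
  have hTq0 : Tf u (q 0) = C (u 0) * (X + C (b 0)) := by
    rw [hq00, Tf_X_mul, Tf_X_mul, hT1, hL1, mul_one, hu1, C_mul]; ring
  obtain ⟨R, hR0, hR⟩ : ∃ R : ℕ → ℂ[X], R 0 = 1 ∧ ∀ n, R (n + 1) = C (u 0)⁻¹ * Tf u (q n) :=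
    ⟨fun n => Nat.casesOn n 1 (fun n => C (u 0)⁻¹ * Tf u (q n)), rfl, fun _ => rfl⟩
  have hc : C (u 0)⁻¹ * C (u 0) = (1 : ℂ[X]) := by rw [← C_mul, inv_mul_cancel₀ hu0, C_1]
  have hTT : HasTTRR R am bm := by
    refine ⟨hR0, ?_, ?_⟩
    · rw [hR0, show (1 : ℕ) = 0 + 1 from rfl, hR, hTq0, hbm0, C_neg]
      linear_combination -(X + C (b 0)) * hc
    · intro n hn
      obtain ⟨n, rfl⟩ : ∃ m, n = m + 1 := ⟨n - 1, by omega⟩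
      rw [add_tsub_cancel_right]
      rcases n with _ | n
      · have h := congrArg (Tf u) hXq0
        rw [Tf_X_mul, hLq0, map_add, ← smul_eq_C_mul, map_smul, smul_eq_C_mul] at h
        have hb0 : β 0 = - am 1 := by rw [hβ, hw0, zero_add, hw1, ham1]; ring
        rw [zero_add, hR0, hR, show (1 : ℕ) = 0 + 1 from rfl, hR]
        rw [hb0, C_mul, C_neg] at h
        simp only [zero_add] at h ⊢
        linear_combination C (u 0)⁻¹ * h + C (am 1) * hc
      · have h := congrArg (Tf u) (hXq n)
        have hl := hLq (n + 1) 0 (by omega)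
        rw [pow_zero, one_mul] at hl
        rw [Tf_X_mul, hl, map_add, map_add, ← smul_eq_C_mul, ← smul_eq_C_mul, map_smul, map_smul,
          smul_eq_C_mul, smul_eq_C_mul, C_0] at h
        rw [hR, hR, hR]
        linear_combination C (u 0)⁻¹ * h
  have hPR : ∀ n, Pm n = R n := by
    intro n
    obtain ⟨⟨hm, hd⟩, _⟩ := ttrr_monic hTT n
    refine smop_unique hPm hm hd ?_
    intro i hi
    rcases n with _ | n
    · omega
    · have : X ^ i * R (n + 1) = (u 0)⁻¹ • (X ^ i * Tf u (q n)) := by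
        rw [hR, smul_eq_C_mul]; ring
      rw [this, map_smul, Lf_pow_Tf u uinv hinv i (q n) (hq0 n) (hq1 n)
        (fun k hk => hLq n k (by omega)), smul_zero]
  have : Pm = R := funext hPR
  rw [this]
  exact hTT
end
end

section
/- (LU factorization for the Christoffel transformation.) Let u be quasi-definite with SMOP (P_n), Jacobi matrix J and recurrence coefficients (a_n, b_n), let c ∈ ℂ with P_n(c) ≠ 0 for all n, and suppose the Christoffel transformation ũ = (x−c)u is quasi-definite with Jacobi matrix J̃. Define L as the unit lower bidiagonal matrix with subdiagonal entries ℓ_n = −(P_{n−1}(c)/P_n(c))·(⟨u,P_n²⟩/⟨u,P_{n−1}²⟩), and U as the upper bidiagonal matrix with diagonal β_n = −P_{n+1}(c)/P_n(c) and superdiagonal entries 1. Then, entrywise, J − cI = L·U and J̃ − cI = U·L. -/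
open Polynomial

noncomputable section

theorem fapply_add (u : ℕ → ℂ) (p q : Polynomial ℂ) :
    fapply u (p + q) = fapply u p + fapply u q := by
  unfold fapply
  exact Polynomial.sum_add_index p q _ (by simp) (by intros; ring)

theorem fapply_C_mul (u : ℕ → ℂ) (r : ℂ) (p : Polynomial ℂ) :
    fapply u (C r * p) = r * fapply u p := by
  unfold fapply
  rw [← Polynomial.smul_eq_C_mul, Polynomial.sum_smul_index _ _ _ (by simp),
    Polynomial.sum_def, Polynomial.sum_def, Finset.mul_sum]
  exact Finset.sum_congr rfl (by intros; ring)

theorem fapply_sub (u : ℕ → ℂ) (p q : Polynomial ℂ) :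
    fapply u (p - q) = fapply u p - fapply u q := by
  have : p - q = p + C (-1) * q := by simp [sub_eq_add_neg]
  rw [this, fapply_add, fapply_C_mul]; ring

theorem fapply_zero (u : ℕ → ℂ) : fapply u 0 = 0 := by simp [fapply]

theorem fapply_shift (u ut : ℕ → ℂ) (c : ℂ) (hut : ∀ n, ut n = u (n + 1) - c * u n)
    (p : Polynomial ℂ) : fapply ut p = fapply u ((X - C c) * p) := by
  induction p using Polynomial.induction_on' with
  | add p q hp hq => rw [mul_add, fapply_add, fapply_add, hp, hq]
  | monomial n r =>
    rw [sub_mul, fapply_sub, fapply_C_mul, Polynomial.X_mul_monomial]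
    simp only [fapply]
    rw [Polynomial.sum_monomial_index _ _ (by simp), Polynomial.sum_monomial_index _ _ (by simp),
      Polynomial.sum_monomial_index _ _ (by simp), hut]
    ring

theorem IsSMOP.coeff_self {u : ℕ → ℂ} {P : ℕ → Polynomial ℂ} (h : IsSMOP u P) (n : ℕ) :
    (P n).coeff n = 1 := by
  have := h.1 n
  rwa [Polynomial.Monic, Polynomial.leadingCoeff, h.2.1 n] at this

theorem IsSMOP.coeff_gt {u : ℕ → ℂ} {P : ℕ → Polynomial ℂ} (h : IsSMOP u P) {n m : ℕ}
    (hm : n < m) : (P n).coeff m = 0 :=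
  Polynomial.coeff_eq_zero_of_natDegree_lt (by rw [h.2.1 n]; exact hm)

theorem IsSMOP.orth {u : ℕ → ℂ} {P : ℕ → Polynomial ℂ} (h : IsSMOP u P) (n m : ℕ) :
    m ≤ n → ∀ q : Polynomial ℂ, (∀ k, m ≤ k → q.coeff k = 0) → fapply u (P n * q) = 0 := by
  induction m with
  | zero =>
    intro _ q hq
    have : q = 0 := by ext k; simpa using hq k (Nat.zero_le _)
    rw [this, mul_zero, fapply_zero]
  | succ m ih =>
    intro hm q hq
    have h1 := ih (by omega) (q - C (q.coeff m) * P m) (by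
      intro k hk
      rw [Polynomial.coeff_sub, Polynomial.coeff_C_mul]
      rcases Nat.eq_or_lt_of_le hk with rfl | hk
      · rw [h.coeff_self]; ring
      · rw [hq k hk, h.coeff_gt hk]; ring)
    have e : P n * q = P n * (q - C (q.coeff m) * P m) + C (q.coeff m) * (P n * P m) := by ring
    rw [e, fapply_add, fapply_C_mul, h1, h.2.2.1 n m (by omega)]; ring

theorem IsSMOP.lead {u : ℕ → ℂ} {P : ℕ → Polynomial ℂ} (h : IsSMOP u P) (n : ℕ)
    (q : Polynomial ℂ) (hq : ∀ k, n < k → q.coeff k = 0) :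
    fapply u (P n * q) = q.coeff n * fapply u (P n * P n) := by
  have h1 := h.orth n n le_rfl (q - C (q.coeff n) * P n) (by
      intro k hk
      rw [Polynomial.coeff_sub, Polynomial.coeff_C_mul]
      rcases Nat.eq_or_lt_of_le hk with rfl | hk
      · rw [h.coeff_self]; ring
      · rw [hq k hk, h.coeff_gt hk]; ring)
  have e : P n * q = P n * (q - C (q.coeff n) * P n) + C (q.coeff n) * (P n * P n) := by ring
  rw [e, fapply_add, fapply_C_mul, h1]; ring

theorem IsSMOP.a_eq {u : ℕ → ℂ} {P : ℕ → Polynomial ℂ} (h : IsSMOP u P) {a b : ℕ → ℂ}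
    (hr : HasTTRR P a b) (n : ℕ) :
    fapply u (P (n + 1) * P (n + 1)) = a (n + 1) * fapply u (P n * P n) := by
  have h1 := h.lead (n + 1) (X * P n) (by
    intro k hk
    obtain ⟨k, rfl⟩ : ∃ j, k = j + 1 := ⟨k - 1, by omega⟩
    rw [Polynomial.coeff_X_mul, h.coeff_gt (by omega)])
  rw [Polynomial.coeff_X_mul, h.coeff_self, one_mul] at h1
  have h2 := hr.2.2 (n + 1) (by omega)
  simp only [Nat.add_sub_cancel] at h2
  have e : P (n + 1) * (X * P n) = P n * P (n + 1 + 1) + C (b (n + 1)) * (P n * P (n + 1))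
      + C (a (n + 1)) * (P n * P n) := by
    linear_combination P n * h2
  rw [← h1, e, fapply_add, fapply_add, fapply_C_mul, fapply_C_mul,
    h.2.2.1 n _ (by omega), h.2.2.1 n _ (by omega)]
  ring

theorem christoffel_kernel {u ut : ℕ → ℂ} {c : ℂ} {P Pt : ℕ → Polynomial ℂ} (h : IsSMOP u P)
    (hc : ∀ n, (P n).eval c ≠ 0) (hut : ∀ n, ut n = u (n + 1) - c * u n)
    (ht : IsSMOP ut Pt) (n : ℕ) :
    (X - C c) * Pt n = P (n + 1) + C (-((P (n + 1)).eval c / (P n).eval c)) * P n := by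
  have hroot : (P (n + 1) + C (-((P (n + 1)).eval c / (P n).eval c)) * P n).IsRoot c := by
    have := hc n
    simp only [Polynomial.IsRoot, Polynomial.eval_add, Polynomial.eval_mul, Polynomial.eval_C]
    field_simp
    ring
  set β := -((P (n + 1)).eval c / (P n).eval c)
  obtain ⟨Q, hQ⟩ := Polynomial.dvd_iff_isRoot.mpr hroot
  suffices hD : Q - Pt n = 0 by
    rw [hQ, sub_eq_zero.mp hD]
  have hmon : (P (n + 1) + C β * P n).Monic := by
    apply (h.1 (n + 1)).add_of_left
    apply Polynomial.degree_lt_degree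
    refine lt_of_le_of_lt (Polynomial.natDegree_C_mul_le β (P n)) ?_
    rw [h.2.1, h.2.1]; omega
  have hdeg : (P (n + 1) + C β * P n).natDegree = n + 1 := by
    rw [Polynomial.natDegree_add_eq_left_of_natDegree_lt, h.2.1]
    refine lt_of_le_of_lt (Polynomial.natDegree_C_mul_le β (P n)) ?_
    rw [h.2.1, h.2.1]; omega
  have hQm : Q.Monic := by
    rw [hQ] at hmon
    exact (Polynomial.monic_X_sub_C c).of_mul_monic_left hmon
  have hQd : Q.natDegree = n := by
    rw [hQ, (Polynomial.monic_X_sub_C c).natDegree_mul hQm, Polynomial.natDegree_X_sub_C] at hdeg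
    omega
  by_contra hne
  have hlt : (Q - Pt n).degree < Q.degree :=
    Polynomial.degree_sub_lt_left (by
      rw [Polynomial.degree_eq_natDegree hQm.ne_zero,
        Polynomial.degree_eq_natDegree (ht.1 n).ne_zero, hQd, ht.2.1]) hQm.ne_zero
      (by rw [hQm, ht.1 n])
  have hlt' : (Q - Pt n).natDegree < n := by
    have := Polynomial.natDegree_lt_natDegree hne hlt
    omega
  set m := (Q - Pt n).natDegree with hm
  have h1 := ht.lead m (Q - Pt n) (fun k hk => Polynomial.coeff_eq_zero_of_natDegree_lt hk)
  have h2 : fapply ut (Pt m * (Q - Pt n)) = 0 := by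
    rw [mul_sub, fapply_sub, ht.2.2.1 m n (by omega), fapply_shift u ut c hut]
    have e : (X - C c) * (Pt m * Q) = P (n + 1) * Pt m + C β * (P n * Pt m) := by
      linear_combination - Pt m * hQ
    rw [e, fapply_add, fapply_C_mul, h.orth (n + 1) (n + 1) le_rfl _ (fun k hk => ht.coeff_gt (by omega)),
      h.orth n n le_rfl _ (fun k hk => ht.coeff_gt (by omega))]
    ring
  rw [h2] at h1
  rcases mul_eq_zero.mp h1.symm with h3 | h3
  · exact hne (Polynomial.leadingCoeff_eq_zero.mp h3)
  · exact ht.2.2.2 m h3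

/-- LU factorization for the Christoffel transformation `ũ = (x-c)u`:
`J - cI = L·U` and `J̃ - cI = U·L`. -/
theorem stmt_10 (u : ℕ → ℂ) (c : ℂ) (P : ℕ → Polynomial ℂ) (hP : IsSMOP u P)
    (a b : ℕ → ℂ) (hrec : HasTTRR P a b) (ha : ∀ n, 1 ≤ n → a n ≠ 0)
    (hc : ∀ n, (P n).eval c ≠ 0)
    (ut : ℕ → ℂ) (hut : ∀ n, ut n = u (n + 1) - c * u n)
    (Pt : ℕ → Polynomial ℂ) (hPt : IsSMOP ut Pt)
    (at_ bt : ℕ → ℂ) (hrect : HasTTRR Pt at_ bt)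
    (ell : ℕ → ℂ)
    (hell : ∀ n, 1 ≤ n → ell n = -((P (n - 1)).eval c / (P n).eval c)
        * (fapply u (P n * P n) / fapply u (P (n - 1) * P (n - 1))))
    (L U : ℕ → ℕ → ℂ)
    (hL : ∀ i j, L i j = if i = j then 1 else if i = j + 1 then ell i else 0)
    (hU : ∀ i j, U i j =
      if j = i then -((P (i + 1)).eval c / (P i).eval c) else if j = i + 1 then 1 else 0) :
    (∀ i j, (jacobi a b i j - if i = j then c else 0) = mprod L U i j)
    ∧ (∀ i j, (jacobi at_ bt i j - if i = j then c else 0) = mprod U L i j) := by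
  set K : ℕ → ℂ := fun n => fapply u (P n * P n) with hK
  have hK0 : ∀ n, K n ≠ 0 := hP.2.2.2
  have haK : ∀ n, a (n + 1) = K (n + 1) / K n := fun n => by
    rw [eq_div_iff (hK0 n)]; exact (hP.a_eq hrec n).symm
  set β : ℕ → ℂ := fun n => -((P (n + 1)).eval c / (P n).eval c) with hβ
  have hell' : ∀ n, ell (n + 1) = -((P n).eval c / (P (n + 1)).eval c) * a (n + 1) := fun n => by
    rw [haK, hell (n + 1) (by omega)]; simp [hK]
  have hsub : ∀ n, a (n + 1) = ell (n + 1) * β n := fun n => by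
    have h1 := hc n
    have h2 := hc (n + 1)
    rw [hell', hβ]; field_simp
  have hb0 : b 0 - c = β 0 := by
    have h1 := congrArg (Polynomial.eval c) hrec.2.1
    have h2 := hc 0
    simp only [Polynomial.eval_add, Polynomial.eval_mul, Polynomial.eval_C,
      Polynomial.eval_X] at h1
    simp only [hβ]; field_simp
    linear_combination -h1
  have hb : ∀ n, b (n + 1) - c = β (n + 1) + ell (n + 1) := fun n => by
    have h1 := congrArg (Polynomial.eval c) (hrec.2.2 (n + 1) (by omega))
    have h2 := hc (n + 1)
    simp only [Polynomial.eval_add, Polynomial.eval_mul, Polynomial.eval_C,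
      Polynomial.eval_X, Nat.add_sub_cancel] at h1
    rw [hell']
    simp only [hβ]; field_simp
    linear_combination -h1
  have hker : ∀ n, (X - C c) * Pt n = P (n + 1) + C (β n) * P n :=
    christoffel_kernel hP hc hut hPt
  have hconn : ∀ n, P (n + 1) = Pt (n + 1) + C (ell (n + 1)) * Pt n := fun n => by
    apply mul_left_cancel₀ (Polynomial.X_sub_C_ne_zero c)
    have h1 := hrec.2.2 (n + 1) (by omega)
    simp only [Nat.add_sub_cancel] at h1
    have h2 : C (b (n + 1)) - C c = C (β (n + 1)) + C (ell (n + 1)) := by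
      rw [← C_sub, ← C_add, hb]
    have h3 : C (a (n + 1)) = C (ell (n + 1)) * C (β n) := by rw [← C_mul, hsub]
    linear_combination h1 - hker (n + 1) - C (ell (n + 1)) * hker n + P (n + 1) * h2 + P n * h3
  have hbt0 : bt 0 - c = β 0 + ell 1 := by
    have h1 := hrect.2.1
    have h2 := hker 0
    have h3 := hconn 0
    rw [hrect.1] at h1 h2 h3
    rw [hrec.1, h3] at h2
    have h4 : C (bt 0 - c) = C (β 0 + ell 1) := by
      rw [C_sub, C_add]
      simp only [zero_add] at h2 h1 ⊢
      linear_combination h2 - h1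
    exact Polynomial.C_injective h4
  have hlin : ∀ n, C (bt (n + 1) - c - (β (n + 1) + ell (n + 2))) * Pt (n + 1)
      + C (at_ (n + 1) - β (n + 1) * ell (n + 1)) * Pt n = 0 := fun n => by
    have h1 := hrect.2.2 (n + 1) (by omega)
    simp only [Nat.add_sub_cancel] at h1
    have h2 := hker (n + 1)
    have h3 := hconn n
    have h4 := hconn (n + 1)
    simp only [C_sub, C_add, C_mul]
    linear_combination h2 - h1 + h4 + C (β (n + 1)) * h3
  have hbt : ∀ n, bt (n + 1) - c = β (n + 1) + ell (n + 2) := fun n => by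
    have h1 := congrArg (fun p => Polynomial.coeff p (n + 1)) (hlin n)
    simp only [Polynomial.coeff_add, Polynomial.coeff_C_mul, hPt.coeff_self,
      hPt.coeff_gt (Nat.lt_succ_self n), Polynomial.coeff_zero] at h1
    linear_combination h1
  have hat : ∀ n, at_ (n + 1) = β (n + 1) * ell (n + 1) := fun n => by
    have h1 := congrArg (fun p => Polynomial.coeff p n) (hlin n)
    simp only [hbt n, sub_self, C_0, zero_mul, zero_add, Polynomial.coeff_C_mul, hPt.coeff_self,
      Polynomial.coeff_zero] at h1
    linear_combination h1
  have hbt' : ∀ n, bt n - c = β n + ell (n + 1) := fun n => by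
    cases n with
    | zero => exact hbt0
    | succ n => exact hbt n
  have hU' : ∀ i j, U i j = if j = i then β i else if j = i + 1 then 1 else 0 := hU
  clear_value β
  constructor
  · intro i j
    cases i with
    | zero =>
      have : mprod L U 0 j = L 0 0 * U 0 j := by
        unfold mprod
        apply tsum_eq_single
        intro k hk
        rw [hL, if_neg (by omega), if_neg (by omega), zero_mul]
      rw [this, hL, hU', jacobi]
      split_ifs <;> first | omega | skip
      all_goals first | contradiction | (simp; done) | (rw [hb0]; ring)
    | succ i =>
      have : mprod L U (i + 1) j = L (i + 1) i * U i j + L (i + 1) (i + 1) * U (i + 1) j := by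
        unfold mprod
        rw [tsum_eq_sum (s := {i, i + 1}), Finset.sum_pair (by omega)]
        intro k hk
        simp only [Finset.mem_insert, Finset.mem_singleton, not_or] at hk
        rw [hL, if_neg (by omega), if_neg (by omega), zero_mul]
      rw [this, hL, hL, hU', hU', jacobi]
      split_ifs <;> first | omega | skip
      all_goals first | (simp; done) | (rw [hb]; ring) | (rw [hsub]; ring)
  · intro i j
    have : mprod U L i j = U i i * L i j + U i (i + 1) * L (i + 1) j := by
      unfold mprod
      rw [tsum_eq_sum (s := {i, i + 1}), Finset.sum_pair (by omega)]
      intro k hk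
      simp only [Finset.mem_insert, Finset.mem_singleton, not_or] at hk
      rw [hU', if_neg (by omega), if_neg (by omega), zero_mul]
    rw [this, hL, hL, hU', hU', jacobi]
    split_ifs <;> first | omega | skip
    all_goals first
      | (simp; done)
      | (rw [hbt']; ring)
      | (subst_vars; rw [hat]; ring)
end
end
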